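/- Under the hypotheses of the trajectory-decay lemma (G(x,u) = A x + B u + f(x,u) with ‖f(x,u)‖ ≤ β(‖x‖² + ‖u‖²) and ‖Df(x,u)‖_op ≤ β(‖x‖ + ‖u‖) for ‖x‖ + ‖u‖ ≤ r_nl; γ ∈ (0,1]; Q ⪰ I, R ⪰ I; √γ·(A+BK) stable with Lyapunov solution P; trajectory x_{t+1} = √γ·G(x_t, Kx_t); V₀ := x₀ᵀ P x₀ ≤ r_nl²/(4β²‖P‖_op³)), for all t ≥ 0: ‖f(x_t, K x_t)‖ ≤ β(1 + ‖K‖_op²) · V₀ · (1 − 1/(2‖P‖_op))^t, and ‖Df(x_t, K x_t)‖_op ≤ β(1 + ‖K‖_op) · V₀^{1/2} · (1 − 1/(2‖P‖_op))^{t/2}. -/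

import Mathlib

open Matrix

/-- A real square matrix is stable if every complex eigenvalue has modulus `< 1`. -/
def IsStable {n : ℕ} (M : Matrix (Fin n) (Fin n) ℝ) : Prop :=
  ∀ μ ∈ spectrum ℂ (M.map Complex.ofReal), ‖μ‖ < 1

/-- Euclidean operator norm of a real matrix. -/
noncomputable def opNorm {p q : ℕ} (M : Matrix (Fin p) (Fin q) ℝ) : ℝ :=
  ‖LinearMap.toContinuousLinearMap (Matrix.toEuclideanLin M)‖

/-- Euclidean norm of a vector in `ℝ^n`. -/
noncomputable def evnorm {n : ℕ} (x : Fin n → ℝ) : ℝ :=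
  ‖(WithLp.equiv 2 (Fin n → ℝ)).symm x‖

/-- `P_{K,γ} = Σ_t γ^t ((A+BK)^t)ᵀ (Q + KᵀRK) (A+BK)^t`, the solution of the discounted
Lyapunov equation when `√γ (A+BK)` is stable. -/
noncomputable def lyapP {d m : ℕ} (A : Matrix (Fin d) (Fin d) ℝ) (B : Matrix (Fin d) (Fin m) ℝ)
    (Q : Matrix (Fin d) (Fin d) ℝ) (R : Matrix (Fin m) (Fin m) ℝ)
    (K : Matrix (Fin m) (Fin d) ℝ) (γ : ℝ) : Matrix (Fin d) (Fin d) ℝ :=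
  ∑' t : ℕ, γ ^ t • (((A + B * K) ^ t)ᵀ * (Q + Kᵀ * R * K) * (A + B * K) ^ t)

open RealInnerProductSpace

/-- The nonlinear remainder `f(x,u) = G(x,u) - Ax - Bu`. -/
noncomputable def remainder {d m : ℕ}
    (G : EuclideanSpace ℝ (Fin d) × EuclideanSpace ℝ (Fin m) → EuclideanSpace ℝ (Fin d))
    (A : Matrix (Fin d) (Fin d) ℝ) (B : Matrix (Fin d) (Fin m) ℝ) :
    EuclideanSpace ℝ (Fin d) × EuclideanSpace ℝ (Fin m) → EuclideanSpace ℝ (Fin d) :=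
  fun p => G p - Matrix.toEuclideanLin A p.1 - Matrix.toEuclideanLin B p.2


section helpers
attribute [local instance] Matrix.frobeniusNormedRing Matrix.frobeniusNormedAlgebra
  Matrix.frobeniusNormedAddCommGroup Matrix.frobeniusNormedSpace

theorem aux_pow_bound {n : ℕ} [NeZero n] (M : Matrix (Fin n) (Fin n) ℝ) (h : IsStable M) :
    ∃ r : ℝ, 0 ≤ r ∧ r < 1 ∧ ∀ᶠ k : ℕ in Filter.atTop, ‖M ^ k‖ ≤ r ^ k := by
  set a : Matrix (Fin n) (Fin n) ℂ := M.map Complex.ofReal with ha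
  have hc : CompleteSpace (Matrix (Fin n) (Fin n) ℂ) := FiniteDimensional.complete ℂ _
  have h1 : spectralRadius ℂ a < ((1 : NNReal) : ENNReal) := by
    apply spectrum.spectralRadius_lt_of_forall_lt
    intro k hk
    have := h k hk
    exact_mod_cast this
  obtain ⟨r, hr1, hr2⟩ := ENNReal.lt_iff_exists_nnreal_btwn.1 h1
  have ht := spectrum.pow_nnnorm_pow_one_div_tendsto_nhds_spectralRadius a
  have hev := ht.eventually (gt_mem_nhds hr1)
  refine ⟨r, r.2, by exact_mod_cast hr2, ?_⟩
  filter_upwards [hev, Filter.eventually_gt_atTop 0] with k hk hk0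
  have h2 : (‖a ^ k‖₊ : ENNReal) ≤ (r : ENNReal) ^ k := by
    have h3 := ENNReal.rpow_le_rpow hk.le (Nat.cast_nonneg (α := ℝ) k)
    rw [← ENNReal.rpow_mul, one_div, inv_mul_cancel₀ (by positivity), ENNReal.rpow_one,
      ENNReal.rpow_natCast] at h3
    exact h3
  have h4 : ‖a ^ k‖₊ ≤ r ^ k := by exact_mod_cast h2
  have h5 : a ^ k = (M ^ k).map Complex.ofReal := by
    have := (Matrix.map_pow M (Complex.ofRealHom) k)
    exact this.symm
  have h6 : ‖a ^ k‖ = ‖M ^ k‖ := by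
    rw [h5]
    exact Matrix.frobenius_norm_map_eq _ _ (fun x => Complex.norm_real x)
  rw [← h6]
  exact_mod_cast h4

theorem aux_summable {n : ℕ} [NeZero n] (M S : Matrix (Fin n) (Fin n) ℝ) (h : IsStable M) :
    Summable (fun t : ℕ => (M ^ t)ᵀ * S * M ^ t) := by
  obtain ⟨r, h0, h1, hev⟩ := aux_pow_bound M h
  have hc : CompleteSpace (Matrix (Fin n) (Fin n) ℝ) := FiniteDimensional.complete ℝ _
  have hg : Summable (fun t : ℕ => ‖S‖ * (r ^ 2) ^ t) :=
    (summable_geometric_of_lt_one (by positivity) (by nlinarith)).mul_left _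
  refine Summable.of_norm_bounded_eventually_nat hg ?_
  filter_upwards [hev] with t ht
  calc ‖(M ^ t)ᵀ * S * M ^ t‖ ≤ ‖(M ^ t)ᵀ‖ * ‖S‖ * ‖M ^ t‖ :=
        (norm_mul_le _ _).trans (by gcongr; exact norm_mul_le _ _)
    _ ≤ r ^ t * ‖S‖ * r ^ t := by
        rw [Matrix.frobenius_norm_transpose]; gcongr
    _ = _ := by rw [← pow_mul]; ring
end helpers

theorem aux_summable' {n : ℕ} [NeZero n] (M S : Matrix (Fin n) (Fin n) ℝ) (h : IsStable M) :
    Summable (fun t : ℕ => (M ^ t)ᵀ * S * M ^ t) := aux_summable M S h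

theorem aux_lyap {d m : ℕ} (A : Matrix (Fin d) (Fin d) ℝ) (B : Matrix (Fin d) (Fin m) ℝ)
    (Q : Matrix (Fin d) (Fin d) ℝ) (R : Matrix (Fin m) (Fin m) ℝ)
    (K : Matrix (Fin m) (Fin d) ℝ) (γ : ℝ) (hγ : 0 < γ) :
    lyapP A B Q R K γ = ∑' t : ℕ, ((Real.sqrt γ • (A + B * K)) ^ t)ᵀ * (Q + Kᵀ * R * K) *
      (Real.sqrt γ • (A + B * K)) ^ t := by
  unfold lyapP
  congr 1; ext1 t
  rw [smul_pow, Matrix.transpose_smul, Matrix.smul_mul, Matrix.smul_mul, Matrix.mul_smul, smul_smul,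
    ← mul_pow, Real.mul_self_sqrt hγ.le]

theorem aux_ts {n : ℕ} (L M : Matrix (Fin n) (Fin n) ℝ) {g : ℕ → Matrix (Fin n) (Fin n) ℝ}
    (hg : Summable g) : ∑' t, L * g t * M = L * (∑' t, g t) * M := by
  rw [Summable.tsum_mul_right _ (hg.mul_left L), hg.tsum_mul_left L]

theorem aux_lyap_eq {n : ℕ} [NeZero n] (M S : Matrix (Fin n) (Fin n) ℝ) (h : IsStable M) :
    (∑' t : ℕ, (M ^ t)ᵀ * S * M ^ t) = S + Mᵀ * (∑' t : ℕ, (M ^ t)ᵀ * S * M ^ t) * M := by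
  have hs := aux_summable' M S h
  conv_lhs => rw [hs.tsum_eq_zero_add]
  have e : ∀ t, (M ^ (t+1))ᵀ * S * M ^ (t+1) = Mᵀ * ((M ^ t)ᵀ * S * M ^ t) * M := by
    intro t; rw [pow_succ, Matrix.transpose_mul]; simp only [Matrix.mul_assoc]
  simp only [e]
  rw [aux_ts Mᵀ M hs]
  simp

/-- quadratic form -/
theorem aux_inner {n : ℕ} (M : Matrix (Fin n) (Fin n) ℝ) (x : EuclideanSpace ℝ (Fin n)) :
    ⟪x, Matrix.toEuclideanLin M x⟫ = x.ofLp ⬝ᵥ M *ᵥ x.ofLp := by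
  rw [EuclideanSpace.inner_eq_star_dotProduct, dotProduct_comm]
  simp

theorem aux_conj {n k : ℕ} (T : Matrix (Fin n) (Fin n) ℝ) (M : Matrix (Fin n) (Fin k) ℝ)
    (x : EuclideanSpace ℝ (Fin k)) :
    ⟪x, Matrix.toEuclideanLin (Mᵀ * T * M) x⟫ =
      ⟪Matrix.toEuclideanLin M x, Matrix.toEuclideanLin T (Matrix.toEuclideanLin M x)⟫ := by
  rw [aux_inner, aux_inner]
  simp only [Matrix.toLpLin_apply, ← Matrix.mulVec_mulVec]
  rw [Matrix.dotProduct_mulVec, Matrix.vecMul_transpose]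

theorem aux_psd {n : ℕ} (T : Matrix (Fin n) (Fin n) ℝ) (hT : (T - 1).PosSemidef)
    (x : EuclideanSpace ℝ (Fin n)) : ‖x‖ ^ 2 ≤ ⟪x, Matrix.toEuclideanLin T x⟫ := by
  have h := hT.dotProduct_mulVec_nonneg x.ofLp
  have h2 : ‖x‖ ^ 2 = x.ofLp ⬝ᵥ x.ofLp := by
    rw [EuclideanSpace.real_norm_sq_eq]; simp [dotProduct, sq]
  rw [aux_inner, h2]
  simp [Matrix.sub_mulVec, dotProduct_sub] at h
  exact h

theorem aux_tsum_nonneg {n : ℕ} [NeZero n] (M S : Matrix (Fin n) (Fin n) ℝ) (h : IsStable M)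
    (hS : ∀ x : EuclideanSpace ℝ (Fin n), 0 ≤ ⟪x, Matrix.toEuclideanLin S x⟫)
    (x : EuclideanSpace ℝ (Fin n)) :
    0 ≤ ⟪x, Matrix.toEuclideanLin (∑' t : ℕ, (M ^ t)ᵀ * S * M ^ t) x⟫ := by
  have hs := (aux_summable' M S h).hasSum
  let φ : Matrix (Fin n) (Fin n) ℝ →+ ℝ :=
    { toFun := fun T => x.ofLp ⬝ᵥ T *ᵥ x.ofLp
      map_zero' := by simp
      map_add' := by intro a b; simp [Matrix.add_mulVec] }
  have hφ : Continuous φ := by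
    change Continuous (fun T : Matrix (Fin n) (Fin n) ℝ => x.ofLp ⬝ᵥ T *ᵥ x.ofLp)
    fun_prop
  have := hs.map φ hφ
  rw [aux_inner]
  refine this.nonneg (fun t => ?_)
  change 0 ≤ x.ofLp ⬝ᵥ ((M ^ t)ᵀ * S * M ^ t) *ᵥ x.ofLp
  rw [← aux_inner, aux_conj]
  exact hS _

theorem aux_opNorm_apply {p q : ℕ} (M : Matrix (Fin p) (Fin q) ℝ) (x : EuclideanSpace ℝ (Fin q)) :
    ‖Matrix.toEuclideanLin M x‖ ≤ opNorm M * ‖x‖ :=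
  (LinearMap.toContinuousLinearMap (Matrix.toEuclideanLin M)).le_opNorm x

theorem aux_opNorm_quad {p : ℕ} (M : Matrix (Fin p) (Fin p) ℝ) (x : EuclideanSpace ℝ (Fin p)) :
    ⟪x, Matrix.toEuclideanLin M x⟫ ≤ opNorm M * ‖x‖ ^ 2 := by
  have h1 := real_inner_le_norm x (Matrix.toEuclideanLin M x)
  have h2 := aux_opNorm_apply M x
  nlinarith [norm_nonneg x]

theorem aux_scalar (V s p β Ny Nf W : ℝ) (hs : 0 ≤ s) (hp : 1 ≤ p)
    (hsV : s ≤ V) (hVs : V ≤ p * s) (hNy : Ny ≤ V - s) (hNf : Nf ≤ p * β ^ 2 * s ^ 2)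
    (hV : V * (4 * β ^ 2 * p ^ 3) ≤ 1)
    (hW : ∀ l : ℝ, 0 < l → W ≤ (1 + l) * Ny + (1 + 1 / l) * Nf) :
    W ≤ (1 - 1 / (2 * p)) * V := by
  have hp0 : 0 < p := by linarith
  rcases (hs.trans hsV).eq_or_lt with h0 | hV0
  · have hs0 : s = 0 := by linarith
    have h1 := hW 1 one_pos
    subst hs0
    rw [← h0] at *
    norm_num at *
    linarith
  · obtain ⟨σ, rfl⟩ : ∃ σ, s = σ * V := ⟨s / V, by field_simp⟩
    obtain ⟨q, hq⟩ : ∃ q, q = 1 / p := ⟨_, rfl⟩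
    have hq0 : 0 < q := by rw [hq]; positivity
    have hpq : p * q = 1 := by rw [hq]; field_simp
    have hσ1 : σ ≤ 1 := by
      by_contra hh; push Not at hh; nlinarith
    have hqσ : q ≤ σ := by
      have : 1 ≤ p * σ := by
        by_contra hh; push Not at hh; nlinarith
      nlinarith
    have hσ0 : 0 < σ := by linarith
    have hNf2 : Nf ≤ σ ^ 2 * q ^ 2 / 4 * V := by
      refine hNf.trans ?_
      have : p * β ^ 2 * (σ * V) ^ 2 = (V * (4 * β ^ 2 * p ^ 3)) * (σ ^ 2 * q ^ 2 / 4 * V) := by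
        have : q ^ 2 * p ^ 2 = 1 := by rw [← mul_pow, mul_comm, hpq, one_pow]
        linear_combination (-(p * β ^ 2 * (σ * V) ^ 2)) * this
      rw [this]
      exact mul_le_of_le_one_left (by positivity) hV
    have hl : 0 < σ * q / 0.9 := by positivity
    have h := hW _ hl
    have e1 : (1 + σ * q / 0.9) * Ny ≤ (1 + σ * q / 0.9) * (V - σ * V) := by gcongr
    have e2 : (1 + 1 / (σ * q / 0.9)) * Nf ≤ (1 + 1 / (σ * q / 0.9)) * (σ ^ 2 * q ^ 2 / 4 * V) := by
      gcongr
    have e3 : (1 + 1 / (σ * q / 0.9)) * (σ ^ 2 * q ^ 2 / 4 * V) =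
        (σ ^ 2 * q ^ 2 / 4 + 0.225 * σ * q) * V := by
      field_simp; ring
    have e4 : 1 / (2 * p) = q / 2 := by rw [hq]; field_simp
    rw [e4]
    have poly : 1 / 2 + σ * (1 - σ) / 0.9 + σ ^ 3 / 4 + 0.225 * σ ≤ 1 := by
      norm_num
      nlinarith [mul_nonneg (sub_nonneg.2 hσ1) (sq_nonneg (σ - 839 / 1000)), sq_nonneg (σ - 839 / 1000)]
    have key : (1 - σ) + σ * q / 0.9 * (1 - σ) + (σ ^ 2 * q ^ 2 / 4 + 0.225 * σ * q) ≤ 1 - q / 2 := by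
      have k1 : σ ^ 2 * q ^ 2 / 4 ≤ q * (σ ^ 3 / 4) := by
        have : σ ^ 2 * q * q ≤ σ ^ 2 * q * σ := by gcongr
        nlinarith
      have k2 := mul_le_mul_of_nonneg_left poly hq0.le
      norm_num at *
      nlinarith
    have := mul_le_mul_of_nonneg_right key hV0.le
    nlinarith

theorem aux_young {n : ℕ} (P : Matrix (Fin n) (Fin n) ℝ)
    (hP : ∀ x : EuclideanSpace ℝ (Fin n), 0 ≤ ⟪x, Matrix.toEuclideanLin P x⟫)
    (y f : EuclideanSpace ℝ (Fin n)) (l : ℝ) (hl : 0 < l) :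
    ⟪y + f, Matrix.toEuclideanLin P (y + f)⟫ ≤ (1 + l) * ⟪y, Matrix.toEuclideanLin P y⟫
      + (1 + 1 / l) * ⟪f, Matrix.toEuclideanLin P f⟫ := by
  have h := hP (l • y - f)
  simp only [map_add, map_sub, map_smul, inner_add_left, inner_add_right, inner_sub_left,
    inner_sub_right, real_inner_smul_left, real_inner_smul_right] at h ⊢
  generalize ⟪y, Matrix.toEuclideanLin P y⟫ = a at *
  generalize ⟪f, Matrix.toEuclideanLin P y⟫ = b at *
  generalize ⟪y, Matrix.toEuclideanLin P f⟫ = c at *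
  generalize ⟪f, Matrix.toEuclideanLin P f⟫ = e at *
  have h2 : b + c ≤ l * a + 1 / l * e := by
    have : l * a + 1 / l * e = (l * (l * a) + e) / l := by field_simp
    rw [this, le_div_iff₀ hl]; linarith
  linarith

/-- Along a damped nonlinear trajectory started inside the Lyapunov sublevel set, both the
nonlinear remainder and its derivative decay geometrically. -/
theorem remainder_decay_along_trajectory {d m : ℕ}
    (G : EuclideanSpace ℝ (Fin d) × EuclideanSpace ℝ (Fin m) → EuclideanSpace ℝ (Fin d))
    (hG : ContDiff ℝ 1 G)
    (A : Matrix (Fin d) (Fin d) ℝ) (B : Matrix (Fin d) (Fin m) ℝ)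
    (Q : Matrix (Fin d) (Fin d) ℝ) (R : Matrix (Fin m) (Fin m) ℝ)
    (K : Matrix (Fin m) (Fin d) ℝ)
    (β rnl : ℝ) (hβ : 1 ≤ β) (hrnl0 : 0 < rnl) (hrnl1 : rnl ≤ 1)
    (hf : ∀ (x : EuclideanSpace ℝ (Fin d)) (u : EuclideanSpace ℝ (Fin m)),
      ‖x‖ + ‖u‖ ≤ rnl → ‖remainder G A B (x, u)‖ ≤ β * (‖x‖ ^ 2 + ‖u‖ ^ 2))
    (hDf : ∀ (x : EuclideanSpace ℝ (Fin d)) (u : EuclideanSpace ℝ (Fin m)),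
      ‖x‖ + ‖u‖ ≤ rnl → ‖fderiv ℝ (remainder G A B) (x, u)‖ ≤ β * (‖x‖ + ‖u‖))
    (γ : ℝ) (hγ : γ ∈ Set.Ioc (0 : ℝ) 1)
    (hQ : (Q - 1).PosSemidef) (hR : (R - 1).PosSemidef)
    (hstab : IsStable (Real.sqrt γ • (A + B * K)))
    (x : ℕ → EuclideanSpace ℝ (Fin d))
    (hstep : ∀ t : ℕ,
      x (t + 1) = Real.sqrt γ • G (x t, Matrix.toEuclideanLin K (x t)))
    (hV0 : ⟪x 0, Matrix.toEuclideanLin (lyapP A B Q R K γ) (x 0)⟫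
        ≤ rnl ^ 2 / (4 * β ^ 2 * opNorm (lyapP A B Q R K γ) ^ 3)) :
    ∀ t : ℕ,
      ‖remainder G A B (x t, Matrix.toEuclideanLin K (x t))‖
          ≤ β * (1 + opNorm K ^ 2)
              * ⟪x 0, Matrix.toEuclideanLin (lyapP A B Q R K γ) (x 0)⟫
              * (1 - 1 / (2 * opNorm (lyapP A B Q R K γ))) ^ t
      ∧ ‖fderiv ℝ (remainder G A B) (x t, Matrix.toEuclideanLin K (x t))‖
          ≤ β * (1 + opNorm K)
              * Real.sqrt ⟪x 0, Matrix.toEuclideanLin (lyapP A B Q R K γ) (x 0)⟫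
              * Real.sqrt ((1 - 1 / (2 * opNorm (lyapP A B Q R K γ))) ^ t) := by
  rcases Nat.eq_zero_or_pos d with hd | hd
  · subst hd
    intro t
    have e1 : ∀ z : EuclideanSpace ℝ (Fin 0), z = 0 := fun z => Subsingleton.elim _ _
    have e2 : fderiv ℝ (remainder G A B) (x t, Matrix.toEuclideanLin K (x t)) = 0 := by
      exact ContinuousLinearMap.ext (fun v => Subsingleton.elim _ _)
    rw [e2, e1 (remainder G A B _), e1 (x 0)]
    simp
  have : NeZero d := ⟨hd.ne'⟩
  obtain ⟨hγ0, hγ1⟩ := hγ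
  have hPdef := aux_lyap A B Q R K γ hγ0
  set M := Real.sqrt γ • (A + B * K) with hM
  set P := lyapP A B Q R K γ with hPd
  set S := Q + Kᵀ * R * K with hS
  have hSq : ∀ z : EuclideanSpace ℝ (Fin d), ‖z‖ ^ 2 + ‖Matrix.toEuclideanLin K z‖ ^ 2 ≤
      ⟪z, Matrix.toEuclideanLin S z⟫ := by
    intro z
    rw [hS, map_add, LinearMap.add_apply, inner_add_right, aux_conj]
    exact add_le_add (aux_psd Q hQ z) (aux_psd R hR _)
  have hPnn : ∀ z : EuclideanSpace ℝ (Fin d), 0 ≤ ⟪z, Matrix.toEuclideanLin P z⟫ := by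
    intro z
    rw [hPdef]
    exact aux_tsum_nonneg M S hstab (fun z => le_trans (by positivity) (hSq z)) z
  have hPeq : ∀ z : EuclideanSpace ℝ (Fin d), ⟪z, Matrix.toEuclideanLin P z⟫ =
      ⟪z, Matrix.toEuclideanLin S z⟫ +
      ⟪Matrix.toEuclideanLin M z, Matrix.toEuclideanLin P (Matrix.toEuclideanLin M z)⟫ := by
    intro z
    have h := aux_lyap_eq M S hstab
    rw [← hPdef] at h
    conv_lhs => rw [h, map_add, LinearMap.add_apply, inner_add_right, aux_conj]
  have hsV : ∀ z : EuclideanSpace ℝ (Fin d), ‖z‖ ^ 2 + ‖Matrix.toEuclideanLin K z‖ ^ 2 ≤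
      ⟪z, Matrix.toEuclideanLin P z⟫ := by
    intro z
    have h1 := hPeq z
    have h2 := hSq z
    have h3 := hPnn (Matrix.toEuclideanLin M z)
    linarith
  set p := opNorm P with hp
  have hp1 : 1 ≤ p := by
    obtain ⟨z, hz⟩ := exists_ne (0 : EuclideanSpace ℝ (Fin d))
    have h1 := hsV z
    have h2 := aux_opNorm_quad P z
    have h3 : 0 < ‖z‖ ^ 2 := by positivity
    by_contra hh
    push Not at hh
    nlinarith [sq_nonneg ‖Matrix.toEuclideanLin K z‖]
  have hp0 : 0 < p := by linarith
  have hβ0 : 0 < β := by linarith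
  set V : ℕ → ℝ := fun t => ⟪x t, Matrix.toEuclideanLin P (x t)⟫ with hVdef
  change V 0 ≤ _ at hV0
  rw [le_div_iff₀ (by positivity)] at hV0
  have hp3 : 1 ≤ p ^ 3 := one_le_pow₀ hp1
  have hβ2 : 1 ≤ β ^ 2 := one_le_pow₀ hβ
  have hr2 : rnl ^ 2 ≤ 1 := pow_le_one₀ hrnl0.le hrnl1
  have hVnn : ∀ t, 0 ≤ V t := fun t => hPnn (x t)
  have hreg : ∀ t, V t ≤ V 0 → ‖x t‖ + ‖Matrix.toEuclideanLin K (x t)‖ ≤ rnl := by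
    intro t ht
    have h1 : ‖x t‖ ^ 2 + ‖Matrix.toEuclideanLin K (x t)‖ ^ 2 ≤ V t := hsV (x t)
    have h2 : V 0 * 4 ≤ rnl ^ 2 := by
      refine le_trans ?_ hV0
      have := one_le_mul_of_one_le_of_one_le hβ2 hp3
      nlinarith [hVnn 0]
    refine le_of_sq_le_sq ?_ hrnl0.le
    nlinarith [sq_nonneg (‖x t‖ - ‖Matrix.toEuclideanLin K (x t)‖), sq_nonneg rnl]
  have hdec : ∀ t, V t ≤ V 0 → V (t + 1) ≤ (1 - 1 / (2 * p)) * V t := by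
    intro t ht
    set f := remainder G A B (x t, Matrix.toEuclideanLin K (x t)) with hfd
    have hfb := hf _ _ (hreg t ht)
    rw [← hfd] at hfb
    have hx : x (t + 1) = Matrix.toEuclideanLin M (x t) + Real.sqrt γ • f := by
      rw [hstep, hfd, hM, remainder]
      have : Matrix.toEuclideanLin (B * K) (x t) =
          Matrix.toEuclideanLin B (Matrix.toEuclideanLin K (x t)) := by
        simp [Matrix.toLpLin_apply, Matrix.mulVec_mulVec]
      simp only [map_smul, map_add, LinearMap.smul_apply, LinearMap.add_apply, this]
      rw [← smul_add]
      congr 1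
      abel
    have h1 := hPeq (x t)
    have h2 := hSq (x t)
    refine aux_scalar (V t) (‖x t‖ ^ 2 + ‖Matrix.toEuclideanLin K (x t)‖ ^ 2) p β
      ⟪Matrix.toEuclideanLin M (x t), Matrix.toEuclideanLin P (Matrix.toEuclideanLin M (x t))⟫
      ⟪Real.sqrt γ • f, Matrix.toEuclideanLin P (Real.sqrt γ • f)⟫ (V (t + 1))
      (by positivity) hp1 (hsV (x t)) ?_ ?_ ?_ ?_ ?_
    · have := aux_opNorm_quad P (x t)
      change V t ≤ p * ‖x t‖ ^ 2 at this
      nlinarith [sq_nonneg ‖Matrix.toEuclideanLin K (x t)‖]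
    · change V t = _ at h1
      linarith
    · have h3 := aux_opNorm_quad P f
      rw [map_smul, real_inner_smul_left, real_inner_smul_right, ← mul_assoc,
        Real.mul_self_sqrt hγ0.le]
      have h4 := hPnn f
      calc _ ≤ ⟪f, Matrix.toEuclideanLin P f⟫ := mul_le_of_le_one_left h4 hγ1
        _ ≤ p * ‖f‖ ^ 2 := h3
        _ ≤ p * (β * (‖x t‖ ^ 2 + ‖Matrix.toEuclideanLin K (x t)‖ ^ 2)) ^ 2 := by gcongr
        _ = _ := by ring
    · have : V t * (4 * β ^ 2 * p ^ 3) ≤ V 0 * (4 * β ^ 2 * p ^ 3) := by gcongr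
      linarith
    · intro l hl
      change ⟪x (t + 1), Matrix.toEuclideanLin P (x (t + 1))⟫ ≤ _
      rw [hx]
      exact aux_young P hPnn _ _ l hl
  have hρ0 : 0 ≤ 1 - 1 / (2 * p) := by
    rw [sub_nonneg, div_le_one (by positivity)]; linarith
  have hρ1 : 1 - 1 / (2 * p) ≤ 1 := by
    have : 0 < 1 / (2 * p) := by positivity
    linarith
  set ρ := 1 - 1 / (2 * p) with hρ
  have hle : ∀ t, V 0 * ρ ^ t ≤ V 0 := fun t =>
    mul_le_of_le_one_right (hVnn 0) (pow_le_one₀ hρ0 hρ1)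
  have hmain : ∀ t, V t ≤ V 0 * ρ ^ t := by
    intro t
    induction t with
    | zero => simp
    | succ t ih =>
      calc V (t + 1) ≤ ρ * V t := hdec t (ih.trans (hle t))
        _ ≤ ρ * (V 0 * ρ ^ t) := by gcongr
        _ = _ := by ring
  intro t
  have hr := hreg t ((hmain t).trans (hle t))
  have hs : ‖x t‖ ^ 2 + ‖Matrix.toEuclideanLin K (x t)‖ ^ 2 ≤ V t := hsV (x t)
  have hk0 : 0 ≤ opNorm K := norm_nonneg _
  change _ ≤ β * (1 + opNorm K ^ 2) * V 0 * ρ ^ t ∧ _ ≤ β * (1 + opNorm K) * √(V 0) * √(ρ ^ t)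
  constructor
  · calc _ ≤ β * (‖x t‖ ^ 2 + ‖Matrix.toEuclideanLin K (x t)‖ ^ 2) := hf _ _ hr
      _ ≤ β * (V 0 * ρ ^ t) := by gcongr; exact hs.trans (hmain t)
      _ ≤ β * (V 0 * ρ ^ t) * (1 + opNorm K ^ 2) :=
        le_mul_of_one_le_right (mul_nonneg hβ0.le (mul_nonneg (hVnn 0) (pow_nonneg hρ0 t)))
          (by nlinarith [sq_nonneg (opNorm K)])
      _ = _ := by ring
  · have hx : ‖x t‖ ≤ √(V 0) * √(ρ ^ t) := by
      rw [← Real.sqrt_mul (hVnn 0)]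
      apply Real.le_sqrt_of_sq_le
      have := hmain t
      nlinarith [sq_nonneg ‖Matrix.toEuclideanLin K (x t)‖]
    calc _ ≤ β * (‖x t‖ + ‖Matrix.toEuclideanLin K (x t)‖) := hDf _ _ hr
      _ ≤ β * (‖x t‖ + opNorm K * ‖x t‖) := by gcongr; exact aux_opNorm_apply K (x t)
      _ = β * (1 + opNorm K) * ‖x t‖ := by ring
      _ ≤ β * (1 + opNorm K) * (√(V 0) * √(ρ ^ t)) := by gcongr
      _ = _ := by ring
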